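/- Let H be a finite-dimensional ℂ-vector space, n ∈ ℤ, and F = (F^p)_{p∈ℤ} a decreasing filtration of H by subspaces with F^p = H for p sufficiently small and F^p = 0 for p sufficiently large. Let S : H × H → ℂ be a nondegenerate bilinear form such that S(F^p, F^q) = 0 whenever p + q > n, and assume dim F^p + dim F^{n+1−p} = dim H for all p. Then for every k: (i) the orthogonal complement of F^{n−k} with respect to S equals F^{k+1}; (ii) S descends to a well-defined pairing Gr_F^k H × Gr_F^{n−k} H → ℂ, where Gr_F^k H = F^k/F^{k+1}; and (iii) this induced pairing is nondegenerate, so that λ ↦ S(λ, −) gives an isomorphism Gr_F^k H ≅ (Gr_F^{n−k} H)^*. -/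

import Mathlib

/-!
For an injective `S : H → H^*`, the left orthogonal complement of `B` is the preimage of the
annihilator of `B`, so its dimension is at most `dim H - dim B`. Hence a subspace `A` with
`S(A, B) = 0` and `dim A + dim B = dim H` is the whole complement
(`mem_of_orthogonal_of_finrank_add_eq`). Taking `A = F^(k+1)`, `B = F^(n-k)` gives (i) and the
left half of (iii); the right half is the same lemma for the flipped form with
`A = F^(n-k+1)`, `B = F^k`. The pairing descends because `S` kills `F^(k+1) × F^(n-k)` and
`F^k × F^(n-k+1)`.
-/

/-- If `A` and `B` are orthogonal for a form with trivial left kernel and have complementary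
dimensions, then every vector left-orthogonal to `B` lies in `A`. -/
lemma mem_of_orthogonal_of_finrank_add_eq {K V : Type*} [Field K] [AddCommGroup V] [Module K V]
    [FiniteDimensional K V] (S : V →ₗ[K] V →ₗ[K] K)
    (hS : ∀ x : V, (∀ y : V, S x y = 0) → x = 0) (A B : Submodule K V)
    (hAB : ∀ x ∈ A, ∀ y ∈ B, S x y = 0)
    (hdim : Module.finrank K A + Module.finrank K B = Module.finrank K V)
    (x : V) (hx : ∀ y ∈ B, S x y = 0) : x ∈ A := by
  let C : Submodule K V := Submodule.comap S B.dualAnnihilator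
  have hinj : Function.Injective S :=
    (injective_iff_map_eq_zero S).2 fun z hz => hS z fun y => by simp [hz]
  have hAC : A ≤ C := fun z hz => (Submodule.mem_dualAnnihilator _).2 (hAB z hz)
  have hC : Module.finrank K C ≤ Module.finrank K B.dualAnnihilator := by
    have hmap : Submodule.map S C ≤ B.dualAnnihilator := Submodule.map_comap_le _ _
    rw [(Submodule.equivMapOfInjective S hinj C).finrank_eq]
    exact Submodule.finrank_mono hmap
  have hB := Subspace.finrank_add_finrank_dualAnnihilator_eq B
  have hEq : A = C := Submodule.eq_of_le_of_finrank_le hAC (by omega)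
  rw [hEq]
  exact (Submodule.mem_dualAnnihilator _).2 hx


/-- Linear-algebra content of Theorem 5.3: let `F` be a finite decreasing exhaustive
filtration of a finite-dimensional ℂ-vector space `H`, and `S` a nondegenerate bilinear
form with `S(F^p, F^q) = 0` for `p + q > n` and `dim F^p + dim F^(n+1-p) = dim H`.
Then (i) the `S`-orthogonal complement of `F^(n-k)` is `F^(k+1)`; (ii) `S` descends to a
well-defined pairing `Gr_F^k H × Gr_F^(n-k) H → ℂ`; (iii) the induced pairing is
nondegenerate, so `λ ↦ S(λ,−)` identifies `Gr_F^k H` with the dual of `Gr_F^(n-k) H`. -/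
theorem stmt7 (H : Type*) [AddCommGroup H] [Module ℂ H] [FiniteDimensional ℂ H]
    (n : ℤ) (F : ℤ → Submodule ℂ H)
    (hdec : Antitone F)
    (hexh : ∃ a : ℤ, ∀ p : ℤ, p ≤ a → F p = ⊤)
    (hfin : ∃ b : ℤ, ∀ p : ℤ, b ≤ p → F p = ⊥)
    (S : H →ₗ[ℂ] H →ₗ[ℂ] ℂ)
    (hS₁ : ∀ x : H, (∀ y : H, S x y = 0) → x = 0)
    (hS₂ : ∀ y : H, (∀ x : H, S x y = 0) → y = 0)
    (hvan : ∀ p q : ℤ, n < p + q → ∀ x ∈ F p, ∀ y ∈ F q, S x y = 0)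
    (hdim : ∀ p : ℤ,
      Module.finrank ℂ (F p) + Module.finrank ℂ (F (n + 1 - p)) = Module.finrank ℂ H)
    (k : ℤ) :
    -- (i) the orthogonal complement of `F^(n-k)` equals `F^(k+1)`
    (∀ x : H, (∀ y ∈ F (n - k), S x y = 0) ↔ x ∈ F (k + 1)) ∧
    -- (ii) `S` descends to a well-defined pairing `Gr_F^k × Gr_F^(n-k) → ℂ`
    (∀ x ∈ F k, ∀ x' ∈ F k, ∀ y ∈ F (n - k), ∀ y' ∈ F (n - k),
      x - x' ∈ F (k + 1) → y - y' ∈ F (n - k + 1) → S x y = S x' y') ∧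
    -- (iii) the induced pairing on the graded pieces is nondegenerate
    (∀ x ∈ F k, (∀ y ∈ F (n - k), S x y = 0) → x ∈ F (k + 1)) ∧
    (∀ y ∈ F (n - k), (∀ x ∈ F k, S x y = 0) → y ∈ F (n - k + 1)) := by
  have hleft : ∀ x : H, (∀ y ∈ F (n - k), S x y = 0) → x ∈ F (k + 1) := by
    refine mem_of_orthogonal_of_finrank_add_eq S hS₁ _ _ (hvan _ _ (by omega)) ?_
    have h := hdim (k + 1)
    rwa [show n + 1 - (k + 1) = n - k by ring] at h
  have hright : ∀ y : H, (∀ x ∈ F k, S x y = 0) → y ∈ F (n - k + 1) := by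
    refine mem_of_orthogonal_of_finrank_add_eq S.flip hS₂ _ _
      (fun y hy x hx => hvan k (n - k + 1) (by omega) x hx y hy) ?_
    have h := hdim k
    rwa [show n + 1 - k = n - k + 1 by ring, add_comm] at h
  refine ⟨fun x => ⟨hleft x, fun hx => hvan _ _ (by omega) x hx⟩, ?_,
    fun x _ => hleft x, fun y _ => hright y⟩
  intro x _ x' hx' y hy y' _ hxx hyy
  have h₁ : S (x - x') y = 0 := hvan (k + 1) (n - k) (by omega) _ hxx _ hy
  have h₂ : S x' (y - y') = 0 := hvan k (n - k + 1) (by omega) _ hx' _ hyy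
  rw [map_sub, LinearMap.sub_apply, sub_eq_zero] at h₁
  rw [map_sub, sub_eq_zero] at h₂
  exact h₁.trans h₂
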